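/- arXiv:1903.00868 — 3 statements merged into one kernel-verified Lean document; each statement's English description precedes it below -/
import Mathlib

section
/- Discrete orthogonality of generalized Schur polynomials (Proposition 3.2): for all λ, μ ∈ Λ^{(m,n)}, Σ_{λ̂ ∈ Λ^{(m,n)}} P_λ(x_λ̂^{(m,n)}) P_μ(x_λ̂^{(m,n)}) W_λ̂ equals 1 if μ = λ and 0 if μ ≠ λ. -/
open MeasureTheory Real Finset

noncomputable section

/-- Vandermonde product `∏_{j<k} (x_j - x_k)`. -/
def vand (n : ℕ) (x : Fin n → ℝ) : ℝ :=
  ∏ j : Fin n, ∏ k ∈ Finset.univ.filter (fun k => j < k), (x j - x k)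

/-- The determinant `det [p_{λ_j + n - j}(x_k)]_{1 ≤ j,k ≤ n}`. -/
def schurDet (n : ℕ) (p : ℕ → Polynomial ℝ) (lam : Fin n → ℕ) (x : Fin n → ℝ) : ℝ :=
  Matrix.det (Matrix.of fun j k : Fin n => (p (lam j + (n - 1 - (j : ℕ)))).eval (x k))

/-- The fundamental alcove `Λ^{(m,n)}` : decreasing sequences with entries ≤ m. -/
def Lam (m n : ℕ) : Finset (Fin n → ℕ) :=
  (Fintype.piFinset fun _ => Finset.range (m + 1)).filter
    fun lam => ∀ i j : Fin n, i ≤ j → lam j ≤ lam i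

/-- The node `x^{(m,n)}_λ̂` with `j`-th component `x^{(m+n)}_{λ̂_j + n - j}`. -/
def node (n : ℕ) (xr : ℕ → ℝ) (lh : Fin n → ℕ) : Fin n → ℝ :=
  fun j => xr (lh j + (n - 1 - (j : ℕ)))

/-- Christoffel weight `(∑_{k=0}^{N-1} p_k(x_ℓ)²)⁻¹`. -/
def chrW (p : ℕ → Polynomial ℝ) (N : ℕ) (xr : ℕ → ℝ) (l : ℕ) : ℝ :=
  (∑ k ∈ Finset.range N, ((p k).eval (xr l)) ^ 2)⁻¹

theorem anti_unique {n : ℕ} {g g' : Fin n → ℕ} (hg : StrictAnti g) (hg' : StrictAnti g')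
    (σ τ : Equiv.Perm (Fin n)) (h : ∀ i, g (σ i) = g' (τ i)) : g = g' := by
  apply Set.range_injOn_strictAnti hg hg'
  have h1 : Set.range (g ∘ σ) = Set.range g := σ.surjective.range_comp g
  have h2 : Set.range (g' ∘ τ) = Set.range g' := τ.surjective.range_comp g'
  rw [← h1, ← h2]
  congr 1
  funext i
  exact h i

theorem exists_anti {n : ℕ} (f : Fin n → ℕ) (hf : Function.Injective f) :
    ∃ (g : Fin n → ℕ) (σ : Equiv.Perm (Fin n)), StrictAnti g ∧ f = g ∘ σ := by
  let f' : Fin n → ℕᵒᵈ := fun i => OrderDual.toDual (f i)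
  have hm := Tuple.monotone_sort f'
  refine ⟨f ∘ Tuple.sort f', (Tuple.sort f')⁻¹, ?_, ?_⟩
  · have ha : Antitone (f ∘ Tuple.sort f') := fun i j hij => hm hij
    exact ha.strictAnti_of_injective (hf.comp (Tuple.sort f').injective)
  · funext i
    simp

/-- strictly decreasing sequences with entries below `N` -/
def antiSet (n N : ℕ) : Finset (Fin n → ℕ) :=
  (Fintype.piFinset fun _ => Finset.range N).filter fun g => ∀ i j : Fin n, i < j → g j < g i

theorem mem_antiSet {n N : ℕ} {g : Fin n → ℕ} :
    g ∈ antiSet n N ↔ (∀ i, g i < N) ∧ StrictAnti g := by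
  simp [antiSet, StrictAnti]

theorem cauchy_binet (n N : ℕ) (A B : Fin n → ℕ → ℝ) :
    ∑ g ∈ antiSet n N, Matrix.det (Matrix.of fun j k => A j (g k)) *
        Matrix.det (Matrix.of fun j k => B j (g k))
      = Matrix.det (Matrix.of fun j k : Fin n => ∑ l ∈ Finset.range N, A j l * B k l) := by
  have h1 : Matrix.det (Matrix.of fun j k : Fin n => ∑ l ∈ Finset.range N, A j l * B k l)
      = ∑ f ∈ Fintype.piFinset fun _ : Fin n => Finset.range N,
        Matrix.det (Matrix.of fun j k => A j (f k)) * ∏ i, B i (f i) := by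
    simp only [Matrix.det_apply', Matrix.of_apply, Finset.prod_univ_sum, Finset.mul_sum]
    rw [Finset.sum_comm]
    refine Finset.sum_congr rfl fun f _ => ?_
    rw [Finset.sum_mul]
    refine Finset.sum_congr rfl fun σ _ => ?_
    rw [Finset.prod_mul_distrib, mul_assoc]
  rw [h1]
  have h2 : ∀ g : Fin n → ℕ, Matrix.det (Matrix.of fun j k => A j (g k)) *
        Matrix.det (Matrix.of fun j k => B j (g k))
      = ∑ σ : Equiv.Perm (Fin n), Matrix.det (Matrix.of fun j k => A j ((g ∘ σ) k)) *
        ∏ i, B i ((g ∘ σ) i) := by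
    intro g
    rw [← Matrix.det_transpose (Matrix.of fun j k => B j (g k))]
    rw [Matrix.det_apply' (Matrix.transpose _), Finset.mul_sum]
    refine Finset.sum_congr rfl fun σ _ => ?_
    have := Matrix.det_permute' σ (Matrix.of fun j k => A j (g k))
    have e : (Matrix.of fun j k => A j ((g ∘ σ) k)) =
      (Matrix.of fun j k => A j (g k)).submatrix id σ := by
      ext i j; rfl
    rw [e, this]
    simp only [Matrix.transpose_apply, Matrix.of_apply, Function.comp]
    ring
  simp only [h2]
  rw [← Finset.sum_product']
  refine Finset.sum_of_injOn (fun q : (Fin n → ℕ) × Equiv.Perm (Fin n) => q.1 ∘ q.2) ?_ ?_ ?_ ?_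
  · rintro ⟨g, σ⟩ hg ⟨g', τ⟩ hg' h
    simp only [Finset.coe_product, Set.mem_prod, Finset.mem_coe, mem_antiSet] at hg hg'
    have hgg : g = g' := anti_unique hg.1.2 hg'.1.2 σ τ (fun i => congrFun h i)
    subst hgg
    have : σ = τ := by
      ext i
      have := hg.1.2.injective (congrFun h i)
      simpa using congrArg Fin.val this
    rw [this]
  · rintro ⟨g, σ⟩ hg
    simp only [Finset.coe_product, Set.mem_prod, Finset.mem_coe, mem_antiSet] at hg
    simp only [Finset.mem_coe, Fintype.mem_piFinset, Finset.mem_range]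
    intro i
    exact hg.1.1 _
  · intro f hf hnot
    by_cases hinj : Function.Injective f
    · exfalso
      obtain ⟨g, σ, hg, rfl⟩ := exists_anti f hinj
      apply hnot
      refine ⟨(g, σ), ?_, rfl⟩
      simp only [Finset.coe_product, Set.mem_prod, Finset.mem_coe, mem_antiSet]
      refine ⟨⟨fun i => ?_, hg⟩, by simp⟩
      have := Fintype.mem_piFinset.1 hf (σ.symm i)
      simpa using this
    · rw [Function.Injective] at hinj
      push Not at hinj
      obtain ⟨i, j, hij, hne⟩ := hinj
      rw [Matrix.det_zero_of_column_eq hne, zero_mul]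
      intro k
      simp [hij]
  · intro q _
    rfl

theorem det_delta (n : ℕ) (s t : Fin n → ℕ) (hs : StrictAnti s) (ht : StrictAnti t) :
    Matrix.det (Matrix.of fun j k : Fin n => if s j = t k then (1 : ℝ) else 0)
      = if t = s then 1 else 0 := by
  by_cases h : t = s
  · subst h
    rw [if_pos rfl]
    convert Matrix.det_one (R := ℝ) (n := Fin n)
    ext i j
    simp [Matrix.one_apply, ht.injective.eq_iff]
  · rw [if_neg h, Matrix.det_apply']
    refine Finset.sum_eq_zero fun σ _ => ?_
    have : ∃ i, s (σ i) ≠ t i := by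
      by_contra! hc
      exact h (anti_unique ht hs 1 σ (fun i => (hc i).symm))
    obtain ⟨i, hi⟩ := this
    rw [Finset.prod_eq_zero (Finset.mem_univ i) (by simp [hi]), mul_zero]

theorem sum_Lam (m n : ℕ) (F : (Fin n → ℕ) → ℝ) :
    ∑ lh ∈ Lam m n, F (fun j => lh j + (n - 1 - (j : ℕ))) = ∑ g ∈ antiSet n (m + n), F g := by
  refine Finset.sum_bij' (fun lh _ j => lh j + (n - 1 - (j : ℕ)))
    (fun g _ j => g j - (n - 1 - (j : ℕ))) ?_ ?_ ?_ ?_ ?_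
  · intro lh h
    simp only [Lam, Finset.mem_filter, Fintype.mem_piFinset, Finset.mem_range] at h
    rw [mem_antiSet]
    refine ⟨fun i => ?_, fun i j hij => ?_⟩
    · have := h.1 i
      have := i.2
      omega
    · have := h.2 i j hij.le
      have := j.2
      have : (i : ℕ) < j := hij
      simp only
      omega
  · intro g h
    rw [mem_antiSet] at h
    have key : ∀ i j : Fin n, i ≤ j → g j + (j - i : ℕ) ≤ g i := by
      intro i j hij
      obtain ⟨j, hj⟩ := j
      induction j with
      | zero =>
        have : i = ⟨0, hj⟩ := Fin.ext (by have : (i : ℕ) ≤ 0 := hij; simpa using this)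
        subst this; simp
      | succ j ih =>
        by_cases e : i = ⟨j + 1, hj⟩
        · subst e; simp
        · have hlt : (i : ℕ) < j + 1 := lt_of_le_of_ne hij (fun h => e (Fin.ext h))
          have h1 := ih (by omega) (show (i : ℕ) ≤ j by omega)
          have h2 : g ⟨j + 1, hj⟩ < g ⟨j, by omega⟩ := h.2 (show j < j + 1 by omega)
          simp only at h1 ⊢
          omega
    simp only [Lam, Finset.mem_filter, Fintype.mem_piFinset, Finset.mem_range]
    refine ⟨fun i => ?_, fun i j hij => ?_⟩
    · have := i.2
      have h0 := key ⟨0, by omega⟩ i (Nat.zero_le _)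
      have h1 := h.1 ⟨0, by omega⟩
      simp only at h0
      omega
    · have := key i j hij
      have := j.2
      have : (i : ℕ) ≤ j := hij
      omega
  · intro lh _
    funext j
    simp
  · intro g h
    rw [mem_antiSet] at h
    funext j
    have : ∀ d (hd : d < n), (n - 1 - d) ≤ g ⟨d, hd⟩ := by
      intro d hd
      induction hk : n - 1 - d generalizing d with
      | zero => omega
      | succ k ih =>
        have h1 := ih (d + 1) (by omega) (by omega)
        have h2 : g ⟨d + 1, by omega⟩ < g ⟨d, hd⟩ := h.2 (show d < d + 1 by omega)
        omega
    have := this j j.2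
    simp only [Fin.eta] at this
    simp only
    omega
  · intro lh _
    rfl

theorem Lam_strictAnti {m n : ℕ} {lam : Fin n → ℕ} (h : lam ∈ Lam m n) :
    StrictAnti (fun j : Fin n => lam j + (n - 1 - (j : ℕ))) ∧
      ∀ j : Fin n, lam j + (n - 1 - (j : ℕ)) < m + n := by
  simp only [Lam, Finset.mem_filter, Fintype.mem_piFinset, Finset.mem_range] at h
  refine ⟨fun i j hij => ?_, fun i => ?_⟩
  · have := h.2 i j hij.le
    have := j.2
    have : (i : ℕ) < j := hij
    simp only
    omega
  · have := h.1 i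
    have := i.2
    omega

theorem expand (p : ℕ → Polynomial ℝ) (hdeg : ∀ l, (p l).degree = l) (N : ℕ) :
    ∀ q : Polynomial ℝ, q.degree < N → ∃ c : ℕ → ℝ,
      q = ∑ k ∈ Finset.range N, Polynomial.C (c k) * p k := by
  induction N with
  | zero =>
    intro q hq
    refine ⟨0, ?_⟩
    have : q.degree < 0 := by simpa using hq
    simpa using this
  | succ N ih =>
    intro q hq
    have hnd : (p N).natDegree = N := Polynomial.natDegree_eq_of_degree_eq_some (hdeg N)
    have hlc : (p N).coeff N ≠ 0 := by
      have h0 : p N ≠ 0 := by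
        intro h
        have := hdeg N
        rw [h] at this
        simp at this
      have := Polynomial.leadingCoeff_ne_zero.2 h0
      rwa [Polynomial.leadingCoeff, hnd] at this
    obtain ⟨c, hc⟩ := ih (q - Polynomial.C (q.coeff N / (p N).coeff N) * p N) (by
      rw [Polynomial.degree_lt_iff_coeff_zero]
      intro k hk
      rcases hk.eq_or_lt with rfl | hk
      · simp [hlc]
      · have h1 : q.coeff k = 0 := (Polynomial.degree_lt_iff_coeff_zero q (N + 1)).1 hq k hk
        have h2 : (p N).coeff k = 0 := Polynomial.coeff_eq_zero_of_natDegree_lt (by omega)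
        simp [h1, h2])
    refine ⟨fun k => if k = N then q.coeff N / (p N).coeff N else c k, ?_⟩
    rw [Finset.sum_range_succ]
    have : ∑ k ∈ Finset.range N, Polynomial.C (if k = N then q.coeff N / (p N).coeff N else c k)
        * p k = ∑ k ∈ Finset.range N, Polynomial.C (c k) * p k := by
      refine Finset.sum_congr rfl fun k hk => ?_
      rw [if_neg (Finset.mem_range.1 hk).ne]
    rw [this, ← hc]
    simp

theorem exists_functional (a b : ℝ) (w : ℝ → ℝ)
    (hw_mom : ∀ l : ℕ, IntegrableOn (fun x => x ^ l * w x) (Set.Ioo a b)) :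
    ∃ L : Polynomial ℝ →ₗ[ℝ] ℝ, ∀ q, L q = ∫ x in Set.Ioo a b, q.eval x * w x := by
  have hint : ∀ q : Polynomial ℝ, IntegrableOn (fun x => q.eval x * w x) (Set.Ioo a b) := by
    intro q
    induction q using Polynomial.induction_on' with
    | add p q hp hq =>
      simp only [Polynomial.eval_add, add_mul]
      exact hp.add hq
    | monomial l c =>
      simp only [Polynomial.eval_monomial, mul_assoc]
      exact (hw_mom l).const_mul c
  refine ⟨{ toFun := fun q => ∫ x in Set.Ioo a b, q.eval x * w x, map_add' := ?_, map_smul' := ?_ }, fun _ => rfl⟩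
  · intro p q
    simp only [Polynomial.eval_add, add_mul]
    exact integral_add (hint p) (hint q)
  · intro c q
    simp only [Polynomial.eval_smul, smul_eq_mul, mul_assoc, RingHom.id_apply]
    exact integral_const_mul c _

theorem kernel_zero (p : ℕ → Polynomial ℝ) (hdeg : ∀ l, (p l).degree = l)
    (L : Polynomial ℝ →ₗ[ℝ] ℝ) (hL : ∀ l k, L (p l * p k) = if l = k then 1 else 0)
    (N : ℕ) (x y : ℝ) (hxy : x ≠ y) (hx : (p N).eval x = 0) (hy : (p N).eval y = 0) :
    ∑ k ∈ Finset.range N, (p k).eval x * (p k).eval y = 0 := by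
  have hN0 : ∀ r : Polynomial ℝ, r.degree < N → L (p N * r) = 0 := by
    intro r hr
    obtain ⟨c, rfl⟩ := expand p hdeg N r hr
    rw [Finset.mul_sum, map_sum]
    refine Finset.sum_eq_zero fun k hk => ?_
    have : p N * (Polynomial.C (c k) * p k) = c k • (p N * p k) := by
      rw [Polynomial.smul_eq_C_mul]; ring
    rw [this, map_smul, hL, if_neg (Finset.mem_range.1 hk).ne']
    simp
  obtain ⟨q, hq⟩ := Polynomial.dvd_iff_isRoot.2 hx
  have hpN : p N ≠ 0 := by
    intro h
    have := hdeg N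
    rw [h] at this
    simp at this
  have hq0 : q ≠ 0 := by
    rintro rfl
    simp at hq
    exact hpN hq
  have hnd : (p N).natDegree = N := Polynomial.natDegree_eq_of_degree_eq_some (hdeg N)
  have hqd : q.degree < N := by
    rw [hq, Polynomial.natDegree_mul (Polynomial.X_sub_C_ne_zero x) hq0,
      Polynomial.natDegree_X_sub_C] at hnd
    rw [Polynomial.degree_eq_natDegree hq0]
    exact_mod_cast (by omega : q.natDegree < N)
  have hc : ∀ k < N, L (q * p k) = (p k).eval x * L q := by
    intro k hk
    obtain ⟨r, hr⟩ := Polynomial.X_sub_C_dvd_sub_C_eval (p := p k) (a := x)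
    have e : q * p k = p N * r + (p k).eval x • q := by
      have : p k = (Polynomial.X - Polynomial.C x) * r + Polynomial.C ((p k).eval x) := by
        rw [← hr]; ring
      rw [Polynomial.smul_eq_C_mul, hq]
      calc q * p k = q * ((Polynomial.X - Polynomial.C x) * r + Polynomial.C ((p k).eval x)) := by
            rw [← this]
        _ = _ := by ring
    rw [e, map_add, hN0 r, map_smul, zero_add, smul_eq_mul]
    by_cases hr0 : r = 0
    · rw [hr0]; simp
    have h2 : (p k - Polynomial.C ((p k).eval x)).natDegree ≤ k := by
      rw [Polynomial.natDegree_sub_C]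
      exact (Polynomial.natDegree_eq_of_degree_eq_some (hdeg k)).le
    rw [hr, Polynomial.natDegree_mul (Polynomial.X_sub_C_ne_zero x) hr0,
      Polynomial.natDegree_X_sub_C] at h2
    rw [Polynomial.degree_eq_natDegree hr0]
    exact_mod_cast (by omega : r.natDegree < N)
  obtain ⟨c, hqc⟩ := expand p hdeg N q hqd
  have hck : ∀ k < N, c k = (p k).eval x * L q := by
    intro k hk
    rw [← hc k hk]
    conv_rhs => rw [hqc]
    rw [Finset.sum_mul, map_sum, Finset.sum_eq_single k]
    · rw [mul_assoc, ← Polynomial.smul_eq_C_mul, map_smul, hL]; simp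
    · intro j _ hj
      rw [mul_assoc, ← Polynomial.smul_eq_C_mul, map_smul, hL]; simp [hj]
    · intro h; exact absurd (Finset.mem_range.2 hk) h
  have hqy : q.eval y = L q * ∑ k ∈ Finset.range N, (p k).eval x * (p k).eval y := by
    conv_lhs => rw [hqc]
    rw [Polynomial.eval_finsetSum, Finset.mul_sum]
    refine Finset.sum_congr rfl fun k hk => ?_
    rw [Polynomial.eval_mul, Polynomial.eval_C, hck k (Finset.mem_range.1 hk)]
    ring
  have hqy0 : q.eval y = 0 := by
    rw [hq, Polynomial.eval_mul] at hy
    rcases mul_eq_zero.1 hy with h | h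
    · simp [sub_eq_zero] at h
      exact absurd h.symm hxy
    · exact h
  have hLq : L q ≠ 0 := by
    intro h
    apply hq0
    rw [hqc]
    refine Finset.sum_eq_zero fun k hk => ?_
    rw [hck k (Finset.mem_range.1 hk), h]
    simp
  rw [hqy0] at hqy
  exact (mul_eq_zero.1 hqy.symm).resolve_left hLq

theorem discrete_orth (p : ℕ → Polynomial ℝ) (hdeg : ∀ l, (p l).degree = l)
    (L : Polynomial ℝ →ₗ[ℝ] ℝ) (hL : ∀ l k, L (p l * p k) = if l = k then 1 else 0)
    (N : ℕ) (xr : ℕ → ℝ) (hxr_mono : ∀ k l : ℕ, k < l → l < N → xr k < xr l)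
    (hxr_root : ∀ l < N, (p N).eval (xr l) = 0) (s t : ℕ) (hs : s < N) (ht : t < N) :
    ∑ l ∈ Finset.range N, (p s).eval (xr l) * ((p t).eval (xr l) * chrW p N xr l)
      = if s = t then 1 else 0 := by
  let A : Matrix (Fin N) (Fin N) ℝ := Matrix.of fun k l => (p k).eval (xr l)
  let B : Matrix (Fin N) (Fin N) ℝ := Matrix.of fun l k => (p k).eval (xr l) * chrW p N xr l
  have hBA : B * A = 1 := by
    ext i j
    rw [Matrix.mul_apply, Matrix.one_apply]
    simp only [A, B, Matrix.of_apply]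
    rw [Fin.sum_univ_eq_sum_range
      (fun k => (p k).eval (xr i) * chrW p N xr i * (p k).eval (xr j)) N]
    have e : ∑ k ∈ Finset.range N, (p k).eval (xr i) * chrW p N xr i * (p k).eval (xr j)
        = chrW p N xr i * ∑ k ∈ Finset.range N, (p k).eval (xr i) * (p k).eval (xr j) := by
      rw [Finset.mul_sum]
      exact Finset.sum_congr rfl fun k _ => by ring
    rw [e]
    split_ifs with h
    · subst h
      rw [chrW]
      simp only [← sq]
      apply inv_mul_cancel₀
      apply ne_of_gt
      have hN : 0 < N := by omega
      refine Finset.sum_pos' (fun k _ => sq_nonneg _) ⟨0, Finset.mem_range.2 hN, ?_⟩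
      have h0 : (p 0).degree = 0 := by simpa using hdeg 0
      rw [Polynomial.eq_C_of_degree_eq_zero h0, Polynomial.eval_C]
      have : (p 0).coeff 0 ≠ 0 := by
        intro h
        rw [Polynomial.eq_C_of_degree_eq_zero h0, h] at h0
        simp at h0
      positivity
    · rw [kernel_zero p hdeg L hL N (xr i) (xr j) ?_ (hxr_root _ i.2) (hxr_root _ j.2), mul_zero]
      rcases lt_or_gt_of_ne (fun h' => h (Fin.ext h')) with h' | h'
      · exact (hxr_mono _ _ h' j.2).ne
      · exact (hxr_mono _ _ h' i.2).ne'
  have hAB : A * B = 1 := mul_eq_one_comm.1 hBA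
  have := congrFun (congrFun hAB ⟨s, hs⟩) ⟨t, ht⟩
  rw [Matrix.mul_apply, Matrix.one_apply] at this
  simp only [A, B, Matrix.of_apply] at this
  rw [Fin.sum_univ_eq_sum_range
      (fun l => (p s).eval (xr l) * ((p t).eval (xr l) * chrW p N xr l)) N] at this
  rw [this]
  simp

theorem generalized_schur_discrete_orthogonality
    (n : ℕ) (hn : 0 < n) (m : ℕ)
    (a b : ℝ) (hab : a < b)
    (w : ℝ → ℝ)
    (hw_cont : ContinuousOn w (Set.Ioo a b))
    (hw_pos : ∀ x ∈ Set.Ioo a b, 0 < w x)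
    (hw_mom : ∀ l : ℕ, IntegrableOn (fun x => x ^ l * w x) (Set.Ioo a b))
    -- the orthonormal polynomials for the weight w
    (p : ℕ → Polynomial ℝ)
    (hdeg : ∀ l, (p l).degree = l)
    (hlead : ∀ l, 0 < (p l).leadingCoeff)
    (horth : ∀ l k, (∫ x in Set.Ioo a b, (p l).eval x * (p k).eval x * w x)
      = if l = k then 1 else 0)
    -- the ordered roots of p_{m+n} in (a,b)
    (xr : ℕ → ℝ)
    (hxr_mem : ∀ l < m + n, xr l ∈ Set.Ioo a b)
    (hxr_mono : ∀ k l : ℕ, k < l → l < m + n → xr k < xr l)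
    (hxr_root : ∀ l < m + n, (p (m + n)).eval (xr l) = 0)
    -- the generalized Schur polynomials
    (P : (Fin n → ℕ) → (Fin n → ℝ) → ℝ)
    (hPcont : ∀ lam, Continuous (P lam))
    (hPdet : ∀ lam x, vand n x * P lam x = schurDet n p lam x)
    (lam mu : Fin n → ℕ)
    (hlam : lam ∈ Lam m n) (hmu : mu ∈ Lam m n) :
    (∑ lh ∈ Lam m n,
      P lam (node n xr lh) * P mu (node n xr lh) *
        (vand n (node n xr lh) ^ 2 *
          ∏ j : Fin n, chrW p (m + n) xr (lh j + (n - 1 - (j : ℕ)))))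
    = if mu = lam then 1 else 0 := by
  obtain ⟨L, hLq⟩ := exists_functional a b w hw_mom
  have hL : ∀ l k, L (p l * p k) = if l = k then 1 else 0 := by
    intro l k
    rw [hLq, ← horth l k]
    simp only [Polynomial.eval_mul]
  obtain ⟨hs, hsN⟩ := Lam_strictAnti hlam
  obtain ⟨ht, htN⟩ := Lam_strictAnti hmu
  set s : Fin n → ℕ := fun j => lam j + (n - 1 - (j : ℕ)) with hsdef
  set t : Fin n → ℕ := fun j => mu j + (n - 1 - (j : ℕ)) with htdef
  have hterm : ∀ lh : Fin n → ℕ, P lam (node n xr lh) * P mu (node n xr lh) *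
        (vand n (node n xr lh) ^ 2 *
          ∏ j : Fin n, chrW p (m + n) xr (lh j + (n - 1 - (j : ℕ))))
      = (fun g : Fin n → ℕ => Matrix.det (Matrix.of fun j k : Fin n => (p (s j)).eval (xr (g k))) *
        Matrix.det (Matrix.of fun j k : Fin n =>
          (p (t j)).eval (xr (g k)) * chrW p (m + n) xr (g k)))
        (fun j => lh j + (n - 1 - (j : ℕ))) := by
    intro lh
    have e1 := hPdet lam (node n xr lh)
    have e2 := hPdet mu (node n xr lh)
    have e3 : Matrix.det (Matrix.of fun j k : Fin n =>
          (p (t j)).eval (xr (lh k + (n - 1 - (k : ℕ)))) *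
            chrW p (m + n) xr (lh k + (n - 1 - (k : ℕ))))
        = (∏ j : Fin n, chrW p (m + n) xr (lh j + (n - 1 - (j : ℕ)))) *
          schurDet n p mu (node n xr lh) := by
      rw [schurDet, ← Matrix.det_mul_row]
      congr 1
      ext j k
      simp only [Matrix.of_apply, node, htdef]
      ring
    have e4 : Matrix.det (Matrix.of fun j k : Fin n =>
          (p (s j)).eval (xr (lh k + (n - 1 - (k : ℕ))))) = schurDet n p lam (node n xr lh) := rfl
    simp only
    rw [e3, e4, ← e1, ← e2]
    ring
  refine (Finset.sum_congr rfl fun lh _ => hterm lh).trans ?_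
  refine (sum_Lam m n (fun g : Fin n → ℕ =>
    Matrix.det (Matrix.of fun j k : Fin n => (p (s j)).eval (xr (g k))) *
      Matrix.det (Matrix.of fun j k : Fin n =>
        (p (t j)).eval (xr (g k)) * chrW p (m + n) xr (g k)))).trans ?_
  refine (cauchy_binet n (m + n) (fun j l => (p (s j)).eval (xr l))
    (fun j l => (p (t j)).eval (xr l) * chrW p (m + n) xr l)).trans ?_
  have hmat : (Matrix.of fun j k : Fin n => ∑ l ∈ Finset.range (m + n), (p (s j)).eval (xr l) *
      ((p (t k)).eval (xr l) * chrW p (m + n) xr l))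
      = Matrix.of fun j k : Fin n => if s j = t k then (1 : ℝ) else 0 := by
    ext j k
    simp only [Matrix.of_apply]
    exact discrete_orth p hdeg L hL (m + n) xr hxr_mono hxr_root _ _ (hsN j) (htN k)
  rw [hmat, det_delta n s t hs ht]
  have hiff : t = s ↔ mu = lam := by
    constructor
    · intro h
      funext j
      have := congrFun h j
      simp only [hsdef, htdef] at this
      omega
    · intro h
      rw [hsdef, htdef, h]
  simp only [hiff]

end
end

section
/- Dual discrete orthogonality of generalized Schur polynomials (Remark 3.3): for all λ̂, μ̂ ∈ Λ^{(m,n)}, Σ_{λ ∈ Λ^{(m,n)}} P_λ(x_λ̂^{(m,n)}) P_λ(x_μ̂^{(m,n)}) equals 1/W_λ̂ if μ̂ = λ̂ and 0 if μ̂ ≠ λ̂. -/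
open MeasureTheory Real Finset

noncomputable section

theorem gs_ortho (L : Polynomial ℝ →ₗ[ℝ] ℝ) (p : ℕ → Polynomial ℝ)
    (hdeg : ∀ l, (p l).degree = l)
    (horth : ∀ l k, L (p l * p k) = if l = k then 1 else 0) (N : ℕ)
    (T : Polynomial ℝ →ₗ[ℝ] ℝ) (hT : ∀ l < N, T (p l) = 0)
    (s : Polynomial ℝ) (hs : s.degree < N) : T s = 0 := by
  let S : Polynomial.Sequence ℝ := ⟨p, hdeg⟩
  have hsp := S.span_degreeLT (m := N) (fun i _ => by
    have : (S i) ≠ 0 := S.ne_zero i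
    simpa using this)
  have hmem : s ∈ Polynomial.degreeLT ℝ N := Polynomial.mem_degreeLT.2 hs
  rw [← hsp] at hmem
  have hle : Submodule.span ℝ (S '' Set.Iio N) ≤ LinearMap.ker T := by
    rw [Submodule.span_le]
    rintro _ ⟨l, hl, rfl⟩
    exact hT l hl
  exact hle hmem

theorem gs_kernel (L : Polynomial ℝ →ₗ[ℝ] ℝ) (p : ℕ → Polynomial ℝ)
    (hdeg : ∀ l, (p l).degree = l)
    (horth : ∀ l k, L (p l * p k) = if l = k then 1 else 0) (N : ℕ)
    (f : Fin N → ℝ) (hf : Function.Injective f) (hroot : ∀ i, (p N).eval (f i) = 0)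
    (i j : Fin N) (hij : i ≠ j) :
    ∑ k ∈ Finset.range N, (p k).eval (f i) * (p k).eval (f j) = 0 := by
  let K : ℝ → Polynomial ℝ := fun x => ∑ k ∈ Finset.range N, ((p k).eval x) • p k
  have hrep : ∀ x, ∀ q : Polynomial ℝ, q.degree < N → L (K x * q) = q.eval x := by
    intro x q hq
    have := gs_ortho L p hdeg horth N
      (L ∘ₗ LinearMap.mulLeft ℝ (K x) - Polynomial.leval x) (by
        intro l hl
        simp [K, Finset.sum_mul, horth, hl]) q hq
    simpa [sub_eq_zero] using this
  have hpN : ∀ s : Polynomial ℝ, s.degree < N → L (p N * s) = 0 := by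
    intro s hs
    have := gs_ortho L p hdeg horth N
      (L ∘ₗ LinearMap.mulLeft ℝ (p N)) (by
        intro l hl
        simp [horth, hl.ne']) s hs
    simpa using this
  have hKdeg : ∀ x, (K x).degree < N := by
    intro x
    rw [← Polynomial.mem_degreeLT]
    refine Submodule.sum_mem _ fun k hk => Submodule.smul_mem _ _ ?_
    rw [Polynomial.mem_degreeLT, hdeg]
    exact_mod_cast Finset.mem_range.1 hk
  obtain ⟨q, hq⟩ := Polynomial.dvd_iff_isRoot.2 (hroot j)
  have hNpos : 0 < N := i.pos
  have hp0 : p N ≠ 0 := by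
    intro h
    have := hdeg N
    simp [h] at this
  have hq0 : q ≠ 0 := by
    rintro rfl
    simp at hq
    exact hp0 hq
  have hqn : q.natDegree + 1 = N := by
    have h1 : (p N).natDegree = N := Polynomial.natDegree_eq_of_degree_eq_some (hdeg N)
    rw [hq, Polynomial.natDegree_mul (Polynomial.X_sub_C_ne_zero _) hq0,
      Polynomial.natDegree_X_sub_C] at h1
    omega
  have hqdeg : q.degree < N := by
    rw [Polynomial.degree_eq_natDegree hq0]
    exact_mod_cast (by omega : q.natDegree < N)
  have hqi : ∀ k, k ≠ j → q.eval (f k) = 0 := by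
    intro k hk
    have h := hroot k
    rw [hq] at h
    simp only [Polynomial.eval_mul, Polynomial.eval_sub, Polynomial.eval_X, Polynomial.eval_C,
      mul_eq_zero, sub_eq_zero] at h
    rcases h with h | h
    · exact absurd (hf h) hk
    · exact h
  have hqj : q.eval (f j) ≠ 0 := by
    intro h
    apply hq0
    refine Polynomial.eq_zero_of_natDegree_lt_card_of_eval_eq_zero q hf (fun k => ?_) (by
      simp; omega)
    by_cases hk : k = j
    · rw [hk, h]
    · exact hqi k hk
  have key : ∀ x, (K x).eval (f j) * L q = q.eval x := by
    intro x
    have hr : (K x - Polynomial.C ((K x).eval (f j))).IsRoot (f j) := by simp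
    obtain ⟨s, hs⟩ := Polynomial.dvd_iff_isRoot.2 hr
    have hsd : s.degree < N := by
      by_cases hs0 : s = 0
      · simp [hs0]
      have h1 : (K x - Polynomial.C ((K x).eval (f j))).degree < N := by
        refine lt_of_le_of_lt (Polynomial.degree_sub_le _ _) (max_lt (hKdeg x) ?_)
        refine lt_of_le_of_lt Polynomial.degree_C_le ?_
        exact_mod_cast hNpos
      refine lt_of_le_of_lt ?_ h1
      rw [hs, mul_comm]
      exact Polynomial.degree_le_mul_left _ (Polynomial.X_sub_C_ne_zero _)
    have e : K x * q = ((K x).eval (f j)) • q + p N * s := by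
      have : K x = Polynomial.C ((K x).eval (f j)) + (Polynomial.X - Polynomial.C (f j)) * s := by
        rw [← hs]; ring
      rw [Polynomial.smul_eq_C_mul, hq]
      conv_lhs => rw [this]
      ring
    rw [← hrep x q hqdeg, e, map_add, hpN s hsd, map_smul]
    simp
  have hLq : L q ≠ 0 := by
    intro h
    have := key (f j)
    rw [h, mul_zero] at this
    exact hqj this.symm
  have h2 := key (f i)
  rw [hqi i hij] at h2
  have h3 := (mul_eq_zero.1 h2).resolve_right hLq
  simpa [K, Polynomial.eval_finset_sum] using h3

/-- shifted index -/
def gsIdx (n : ℕ) (lam : Fin n → ℕ) : Fin n → ℕ := fun j => lam j + (n - 1 - (j : ℕ))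

theorem gs_anti_gap (n : ℕ) (g : Fin n → ℕ) (hg : StrictAnti g) (d : ℕ) :
    ∀ i j : Fin n, (j : ℕ) = i + d → g j + d ≤ g i := by
  induction d with
  | zero =>
    intro i j h
    have : j = i := Fin.ext (by simpa using h)
    simp [this]
  | succ d ih =>
    intro i j h
    have h1 := ih i ⟨i + d, by omega⟩ rfl
    have h2 : g j < g ⟨i + d, by omega⟩ := hg (by rw [Fin.lt_def]; simp; omega)
    omega

theorem gs_mem_Lam (m n : ℕ) (lam : Fin n → ℕ) :
    lam ∈ Lam m n ↔ (∀ i, lam i ≤ m) ∧ ∀ i j : Fin n, i ≤ j → lam j ≤ lam i := by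
  simp [Lam, Nat.lt_succ_iff]

theorem gs_idx_anti (m n : ℕ) (lam : Fin n → ℕ) (h : lam ∈ Lam m n) :
    StrictAnti (gsIdx n lam) := by
  intro i j hij
  have := ((gs_mem_Lam m n lam).1 h).2 i j hij.le
  rw [Fin.lt_def] at hij
  simp only [gsIdx]
  omega

theorem gs_idx_lt (m n : ℕ) (lam : Fin n → ℕ) (h : lam ∈ Lam m n) (j : Fin n) :
    gsIdx n lam j < m + n := by
  have := ((gs_mem_Lam m n lam).1 h).1 j
  simp only [gsIdx]
  omega

theorem gs_idx_inj (n : ℕ) (lam mu : Fin n → ℕ) (h : gsIdx n lam = gsIdx n mu) : lam = mu := by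
  funext j
  have := congrFun h j
  simp only [gsIdx] at this
  omega

theorem gs_idx_surj (m n : ℕ) (g : Fin n → ℕ) (hg : StrictAnti g) (hlt : ∀ j, g j < m + n) :
    ∃ lam ∈ Lam m n, gsIdx n lam = g := by
  have gap : ∀ i j : Fin n, i ≤ j → g j + (j - i) ≤ g i := fun i j hij =>
    gs_anti_gap n g hg _ i j (by rw [Fin.le_def] at hij; omega)
  have hlow : ∀ j : Fin n, n - 1 - (j : ℕ) ≤ g j := by
    intro j
    have := gap j ⟨n - 1, by have := j.2; omega⟩ (by
      rw [Fin.le_def]; have := j.2; simp only; omega)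
    simp only at this
    omega
  refine ⟨fun j => g j - (n - 1 - (j : ℕ)), (gs_mem_Lam _ _ _).2 ⟨fun j => ?_, fun i j hij => ?_⟩, ?_⟩
  · have h1 := gap ⟨0, j.pos⟩ j (by rw [Fin.le_def]; simp)
    have h2 := hlt ⟨0, j.pos⟩
    simp at h1
    omega
  · have h1 := gap i j hij
    have := hlow i
    have := hlow j
    rw [Fin.le_def] at hij
    omega
  · funext j
    have := hlow j
    simp only [gsIdx]
    omega

theorem gs_anti_unique (n : ℕ) (g h : Fin n → ℕ) (hg : StrictAnti g) (hh : StrictAnti h)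
    (hsub : ∀ j, ∃ k, g j = h k) : g = h := by
  classical
  have hr : Set.range (g ∘ Fin.rev) = Set.range (h ∘ Fin.rev) := by
    rw [Fin.rev_surjective.range_comp, Fin.rev_surjective.range_comp]
    have h1 : (Finset.univ.image g) ⊆ Finset.univ.image h := by
      intro x hx
      obtain ⟨j, -, rfl⟩ := Finset.mem_image.1 hx
      obtain ⟨k, hk⟩ := hsub j
      rw [hk]; simp
    have h2 := Finset.eq_of_subset_of_card_le h1 (by
      rw [Finset.card_image_of_injective _ hg.injective,
        Finset.card_image_of_injective _ hh.injective])
    have h3 := congrArg (fun s : Finset ℕ => (s : Set ℕ)) h2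
    simpa using h3
  have := (StrictMono.range_inj (hg.comp Fin.rev_strictAnti) (hh.comp Fin.rev_strictAnti)).1 hr
  funext j
  simpa using congrFun this (Fin.rev j)

theorem gs_cauchy_binet (m n : ℕ) (F G : ℕ → Fin n → ℝ) :
    Matrix.det (Matrix.of fun j k : Fin n => ∑ l ∈ Finset.range (m + n), F l j * G l k)
    = ∑ lam ∈ Lam m n,
      Matrix.det (Matrix.of fun j k : Fin n => F (gsIdx n lam j) k) *
      Matrix.det (Matrix.of fun j k : Fin n => G (gsIdx n lam j) k) := by
  classical
  let D : (Fin n → ℕ) → ℝ := fun f => Matrix.det (Matrix.of fun j k : Fin n => G (f j) k)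
  have h1 : Matrix.det (Matrix.of fun j k : Fin n => ∑ l ∈ Finset.range (m + n), F l j * G l k)
      = ∑ f ∈ Fintype.piFinset (fun _ : Fin n => Finset.range (m + n)),
        (∏ j, F (f j) j) * D f := by
    have := (Matrix.detRowAlternating (R := ℝ) (n := Fin n)).toMultilinearMap.map_sum_finset
      (fun j l => F l j • G l) (fun _ => Finset.range (m + n))
    have e : (Matrix.of fun j k : Fin n => ∑ l ∈ Finset.range (m + n), F l j * G l k)
      = fun j => ∑ l ∈ Finset.range (m + n), F l j • G l := by
      funext j k
      simp
    rw [e]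
    refine Eq.trans this (Finset.sum_congr rfl fun f _ => ?_)
    rw [MultilinearMap.map_smul_univ]
    rfl
  have h2 : ∑ f ∈ Fintype.piFinset (fun _ : Fin n => Finset.range (m + n)), (∏ j, F (f j) j) * D f
      = ∑ f ∈ (Fintype.piFinset (fun _ : Fin n => Finset.range (m + n))).filter
          (fun f => Function.Injective f), (∏ j, F (f j) j) * D f := by
    symm
    refine Finset.sum_subset (Finset.filter_subset _ _) fun f hf hnf => ?_
    have hni : ¬ Function.Injective f := fun h => hnf (Finset.mem_filter.2 ⟨hf, h⟩)
    simp only [Function.Injective, not_forall] at hni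
    obtain ⟨i, j, hij, hne⟩ := hni
    have : D f = 0 := Matrix.det_zero_of_row_eq hne (by funext k; simp [hij])
    rw [this, mul_zero]
  have h3 : ∀ lam ∈ Lam m n,
      Matrix.det (Matrix.of fun j k : Fin n => F (gsIdx n lam j) k) * D (gsIdx n lam)
      = ∑ σ : Equiv.Perm (Fin n),
        (∏ j, F ((gsIdx n lam ∘ σ) j) j) * D (gsIdx n lam ∘ σ) := by
    intro lam _
    rw [Matrix.det_apply', Finset.sum_mul]
    refine Finset.sum_congr rfl fun σ _ => ?_
    have : D (gsIdx n lam ∘ σ) = ((Equiv.Perm.sign σ : ℤ) : ℝ) * D (gsIdx n lam) :=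
      Matrix.det_permute σ (Matrix.of fun j k : Fin n => G (gsIdx n lam j) k)
    rw [this]
    simp only [Matrix.of_apply, Function.comp]
    ring
  rw [h1, h2]
  refine Eq.trans ?_ (Finset.sum_congr rfl h3).symm
  rw [← Finset.sum_product' (Lam m n) Finset.univ
    (fun lam (σ : Equiv.Perm (Fin n)) => (∏ j, F ((gsIdx n lam ∘ σ) j) j) * D (gsIdx n lam ∘ σ))]
  symm
  refine Finset.sum_bij (fun x _ => gsIdx n x.1 ∘ x.2) ?_ ?_ ?_ ?_
  · rintro ⟨lam, σ⟩ hx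
    have hl := (Finset.mem_product.1 hx).1
    simp only [Finset.mem_filter, Fintype.mem_piFinset, Finset.mem_range]
    exact ⟨fun j => gs_idx_lt m n lam hl _, (gs_idx_anti m n lam hl).injective.comp σ.injective⟩
  · rintro ⟨lam, σ⟩ hx ⟨mu, τ⟩ hy h
    have hl := (Finset.mem_product.1 hx).1
    have hm := (Finset.mem_product.1 hy).1
    simp only at h hl hm
    have e : gsIdx n lam = gsIdx n mu := by
      refine gs_anti_unique n _ _ (gs_idx_anti m n lam hl) (gs_idx_anti m n mu hm) fun j => ?_
      exact ⟨τ (σ.symm j), by simpa using congrFun h (σ.symm j)⟩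
    have e2 := gs_idx_inj n _ _ e
    subst e2
    have : σ = τ := by
      ext1 j
      exact (gs_idx_anti m n lam hl).injective (congrFun h j)
    rw [this]
  · intro f hf
    simp only [Finset.mem_filter, Fintype.mem_piFinset, Finset.mem_range] at hf
    obtain ⟨hlt, hinj⟩ := hf
    let σ : Equiv.Perm (Fin n) := Fin.revPerm.trans (Tuple.sort f)
    have hmono : StrictMono (f ∘ Tuple.sort f) :=
      (Tuple.monotone_sort f).strictMono_of_injective (hinj.comp (Tuple.sort f).injective)
    have hanti : StrictAnti (f ∘ σ) := hmono.comp_strictAnti Fin.rev_strictAnti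
    obtain ⟨lam, hl, he⟩ := gs_idx_surj m n (f ∘ σ) hanti (fun j => hlt _)
    refine ⟨(lam, σ.symm), by simp [hl], ?_⟩
    simp only [he]
    funext j
    simp
  · intro _ _
    rfl

theorem gs_vand_ne (n : ℕ) (x : Fin n → ℝ) (hx : Function.Injective x) : vand n x ≠ 0 := by
  unfold vand
  refine Finset.prod_ne_zero_iff.2 fun j _ => Finset.prod_ne_zero_iff.2 fun k hk => ?_
  have := (Finset.mem_filter.1 hk).2
  exact sub_ne_zero.2 fun h => this.ne (hx h)

theorem gs_integrable (a b : ℝ) (w : ℝ → ℝ)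
    (hw_mom : ∀ l : ℕ, IntegrableOn (fun x => x ^ l * w x) (Set.Ioo a b)) (q : Polynomial ℝ) :
    IntegrableOn (fun x => q.eval x * w x) (Set.Ioo a b) := by
  induction q using Polynomial.induction_on' with
  | add r s hr hs =>
    simp only [Polynomial.eval_add, add_mul]
    exact hr.add hs
  | monomial l c =>
    simp only [Polynomial.eval_monomial, mul_assoc]
    exact (hw_mom l).const_mul c

/-- integration functional -/
def gsL (a b : ℝ) (w : ℝ → ℝ)
    (hw_mom : ∀ l : ℕ, IntegrableOn (fun x => x ^ l * w x) (Set.Ioo a b)) :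
    Polynomial ℝ →ₗ[ℝ] ℝ where
  toFun q := ∫ x in Set.Ioo a b, q.eval x * w x
  map_add' r s := by
    simp only [Polynomial.eval_add, add_mul]
    exact integral_add (gs_integrable a b w hw_mom r) (gs_integrable a b w hw_mom s)
  map_smul' c q := by
    simp only [Polynomial.eval_smul, smul_eq_mul, mul_assoc, RingHom.id_apply]
    exact integral_const_mul c _

theorem generalized_schur_dual_discrete_orthogonality
    (n : ℕ) (hn : 0 < n) (m : ℕ)
    (a b : ℝ) (hab : a < b)
    (w : ℝ → ℝ)
    (hw_cont : ContinuousOn w (Set.Ioo a b))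
    (hw_pos : ∀ x ∈ Set.Ioo a b, 0 < w x)
    (hw_mom : ∀ l : ℕ, IntegrableOn (fun x => x ^ l * w x) (Set.Ioo a b))
    -- the orthonormal polynomials for the weight w
    (p : ℕ → Polynomial ℝ)
    (hdeg : ∀ l, (p l).degree = l)
    (hlead : ∀ l, 0 < (p l).leadingCoeff)
    (horth : ∀ l k, (∫ x in Set.Ioo a b, (p l).eval x * (p k).eval x * w x)
      = if l = k then 1 else 0)
    -- the ordered roots of p_{m+n} in (a,b)
    (xr : ℕ → ℝ)
    (hxr_mem : ∀ l < m + n, xr l ∈ Set.Ioo a b)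
    (hxr_mono : ∀ k l : ℕ, k < l → l < m + n → xr k < xr l)
    (hxr_root : ∀ l < m + n, (p (m + n)).eval (xr l) = 0)
    -- the generalized Schur polynomials
    (P : (Fin n → ℕ) → (Fin n → ℝ) → ℝ)
    (hPcont : ∀ lam, Continuous (P lam))
    (hPdet : ∀ lam x, vand n x * P lam x = schurDet n p lam x)
    (lh mh : Fin n → ℕ)
    (hlh : lh ∈ Lam m n) (hmh : mh ∈ Lam m n) :
    (∑ lam ∈ Lam m n, P lam (node n xr lh) * P lam (node n xr mh))
    = if mh = lh then
        (vand n (node n xr lh) ^ 2 *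
          ∏ j : Fin n, chrW p (m + n) xr (lh j + (n - 1 - (j : ℕ))))⁻¹
      else 0 := by
  classical
  let L := gsL a b w hw_mom
  have hL : ∀ l k, L (p l * p k) = if l = k then 1 else 0 := by
    intro l k
    rw [← horth l k]
    simp [L, gsL]
  let f : Fin (m + n) → ℝ := fun i => xr i
  have hfm : StrictMono f := fun i j hij => hxr_mono i j hij j.2
  have hker : ∀ i j, i < m + n → j < m + n → i ≠ j →
      ∑ k ∈ Finset.range (m + n), (p k).eval (xr i) * (p k).eval (xr j) = 0 := by
    intro i j hi hj hij
    exact gs_kernel L p hdeg hL (m + n) f hfm.injective (fun i => hxr_root i i.2) ⟨i, hi⟩ ⟨j, hj⟩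
      (by simpa using hij)
  have hVinj : ∀ nu ∈ Lam m n, vand n (node n xr nu) ≠ 0 := by
    intro nu hnu
    apply gs_vand_ne
    intro j k hjk
    have h1 := gs_idx_lt m n nu hnu
    have := hfm.injective (a₁ := ⟨_, h1 j⟩) (a₂ := ⟨_, h1 k⟩) hjk
    exact (gs_idx_anti m n nu hnu).injective (by simpa using this)
  have hV1 := hVinj lh hlh
  have hV2 := hVinj mh hmh
  have hP : ∀ lam, ∀ x, vand n x ≠ 0 → P lam x = schurDet n p lam x / vand n x := by
    intro lam x hx
    rw [← hPdet lam x, mul_div_cancel_left₀ _ hx]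
  have hsum : (∑ lam ∈ Lam m n, P lam (node n xr lh) * P lam (node n xr mh))
      = Matrix.det (Matrix.of fun j k : Fin n => ∑ l ∈ Finset.range (m + n),
          (p l).eval (node n xr lh j) * (p l).eval (node n xr mh k)) /
        (vand n (node n xr lh) * vand n (node n xr mh)) := by
    rw [gs_cauchy_binet m n (fun l j => (p l).eval (node n xr lh j))
      (fun l k => (p l).eval (node n xr mh k)), Finset.sum_div]
    refine Finset.sum_congr rfl fun lam _ => ?_
    rw [hP lam _ hV1, hP lam _ hV2, div_mul_div_comm]
    rfl
  rw [hsum]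
  split_ifs with h
  · subst h
    have hd : (Matrix.of fun j k : Fin n => ∑ l ∈ Finset.range (m + n),
          (p l).eval (node n xr mh j) * (p l).eval (node n xr mh k))
        = Matrix.diagonal fun j => (chrW p (m + n) xr (mh j + (n - 1 - (j : ℕ))))⁻¹ := by
      ext j k
      by_cases hjk : j = k
      · subst hjk
        simp [chrW, node, pow_two]
      · rw [Matrix.diagonal_apply_ne _ hjk]
        exact hker _ _ (gs_idx_lt m n mh hmh j) (gs_idx_lt m n mh hmh k)
          (fun e => hjk ((gs_idx_anti m n mh hmh).injective e))
    rw [hd, Matrix.det_diagonal, Finset.prod_inv_distrib, mul_inv, pow_two, div_eq_mul_inv,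
      mul_comm]
  · have : ∃ j, ∀ k, gsIdx n lh j ≠ gsIdx n mh k := by
      by_contra hc
      push Not at hc
      exact h (gs_idx_inj n _ _ (gs_anti_unique n _ _ (gs_idx_anti m n lh hlh)
        (gs_idx_anti m n mh hmh) hc)).symm
    obtain ⟨j, hj⟩ := this
    rw [Matrix.det_eq_zero_of_row_eq_zero j, zero_div]
    intro k
    exact hker _ _ (gs_idx_lt m n lh hlh j) (gs_idx_lt m n mh hmh k) (hj k)

end
end

section
/- Exact Gaussian cubature rule in ℙ^{(2m+1,n)} (Proposition 4.2): for every f ∈ ℙ^{(2m+1,n)}, (1/n!) ∫_a^b ⋯ ∫_a^b f(x) W(x) dx_1⋯dx_n = Σ_{λ̂ ∈ Λ^{(m,n)}} f(x_λ̂^{(m,n)}) W_λ̂. -/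
open MeasureTheory Real Finset

noncomputable section

/-- The symmetric monomial `M_λ(x)`. -/
def msym (n : ℕ) (lam : Fin n → ℕ) : (Fin n → ℝ) → ℝ := fun x =>
  ∑ mu ∈ Finset.univ.image (fun σ : Equiv.Perm (Fin n) => lam ∘ σ), ∏ j : Fin n, x j ^ mu j

/-- The space `ℙ^{(m,n)}`: span of the symmetric monomials `M_λ`, `λ ∈ Λ^{(m,n)}`. -/
def pSpace (m n : ℕ) : Submodule ℝ ((Fin n → ℝ) → ℝ) :=
  Submodule.span ℝ (msym n '' (Lam m n : Set (Fin n → ℕ)))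


open Polynomial in
theorem gauss_orth (p : ℕ → Polynomial ℝ) (hdeg : ∀ l, (p l).degree = l)
    (I : Polynomial ℝ →ₗ[ℝ] ℝ) (horth : ∀ l k, I (p l * p k) = if l = k then 1 else 0)
    (N : ℕ) (d : ℕ) : d ≤ N → ∀ s : Polynomial ℝ, s.degree < d → I (p N * s) = 0 := by
  induction d with
  | zero =>
    intro _ s hs
    have : s = 0 := by
      rw [← Polynomial.degree_eq_bot]
      simpa using hs
    simp [this]
  | succ d ih =>
    intro hd s hs
    have hlc : (p d).coeff d ≠ 0 := by
      have := Polynomial.coeff_ne_zero_of_eq_degree (hdeg d)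
      exact this
    set c := s.coeff d / (p d).coeff d with hc
    have hr : (s - c • p d).degree < d := by
      rw [Polynomial.degree_lt_iff_coeff_zero]
      intro k hk
      rcases hk.eq_or_lt with rfl | hk
      · simp [hc, hlc]
      · have h1 : s.coeff k = 0 := by
          apply Polynomial.coeff_eq_zero_of_degree_lt
          refine lt_of_lt_of_le hs ?_
          exact_mod_cast hk
        have h2 : (p d).coeff k = 0 := by
          apply Polynomial.coeff_eq_zero_of_degree_lt
          rw [hdeg]
          exact_mod_cast hk
        simp [h1, h2]
    have h3 := ih (by omega) _ hr
    have h4 : p N * s = p N * (s - c • p d) + c • (p N * p d) := by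
      rw [mul_sub, mul_smul_comm]; ring
    rw [h4, map_add, h3, map_smul, horth, if_neg (by omega)]
    simp

open Polynomial in
theorem gauss_quad (p : ℕ → Polynomial ℝ) (hdeg : ∀ l, (p l).degree = l)
    (I : Polynomial ℝ →ₗ[ℝ] ℝ) (horth : ∀ l k, I (p l * p k) = if l = k then 1 else 0)
    (N : ℕ) (xr : ℕ → ℝ) (hinj : Set.InjOn xr (Finset.range N : Finset ℕ))
    (hroot : ∀ l < N, (p N).eval (xr l) = 0)
    (q : Polynomial ℝ) (hq : q.degree < ((2 * N : ℕ) : WithBot ℕ)) :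
    I q = ∑ l ∈ Finset.range N, chrW p N xr l * q.eval (xr l) := by
  set W : ℕ → ℝ := fun l => I (Lagrange.basis (Finset.range N) xr l) with hW
  have hlow : ∀ r : Polynomial ℝ, r.degree < N →
      I r = ∑ l ∈ Finset.range N, W l * r.eval (xr l) := by
    intro r hr
    have h := Lagrange.eq_interpolate (s := Finset.range N) (v := xr) (f := r) hinj (by simpa using hr)
    conv_lhs => rw [h, Lagrange.interpolate_apply, map_sum]
    refine Finset.sum_congr rfl fun l _ => ?_
    rw [← Polynomial.smul_eq_C_mul, map_smul, smul_eq_mul, mul_comm]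
  have hN0 : p N ≠ 0 := by
    intro h
    have := hdeg N
    simp [h] at this
  have hgen : ∀ r : Polynomial ℝ, r.degree < ((2 * N : ℕ) : WithBot ℕ) →
      I r = ∑ l ∈ Finset.range N, W l * r.eval (xr l) := by
    intro r hr
    have hmod : (r % p N).degree < N := by
      rw [← hdeg N]; exact EuclideanDomain.mod_lt r hN0
    have hdiv : (r / p N).degree < N := by
      by_cases h0 : r / p N = 0
      · rw [h0, Polynomial.degree_zero]; exact WithBot.bot_lt_coe _
      have hle : (p N).degree ≤ r.degree := by
        by_contra hlt
        exact h0 ((Polynomial.div_eq_zero_iff hN0).2 (not_le.1 hlt))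
      have h1 := Polynomial.degree_add_div hN0 hle
      rw [Polynomial.degree_eq_natDegree h0] at h1 ⊢
      rw [← h1, hdeg] at hr
      have : N + (r / p N).natDegree < 2 * N := by exact_mod_cast hr
      have : (r / p N).natDegree < N := by omega
      exact_mod_cast this
    have he : r = p N * (r / p N) + r % p N := (EuclideanDomain.div_add_mod r (p N)).symm
    conv_lhs => rw [he, map_add, gauss_orth p hdeg I horth N N le_rfl _ hdiv, zero_add, hlow _ hmod]
    refine Finset.sum_congr rfl fun l hl => ?_
    conv_rhs => rw [he]
    simp [hroot l (Finset.mem_range.1 hl)]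
  have hWeq : ∀ l < N, W l = chrW p N xr l := by
    let A : Matrix (Fin N) (Fin N) ℝ := Matrix.of fun k l => (p k).eval (xr l)
    let B : Matrix (Fin N) (Fin N) ℝ := Matrix.of fun l k => W l * (p k).eval (xr l)
    have hAB : A * B = 1 := by
      ext j k
      rw [Matrix.mul_apply, Matrix.one_apply]
      have h := hgen (p j * p k) (by
        rw [Polynomial.degree_mul, hdeg, hdeg]
        have : (j : ℕ) + (k : ℕ) < 2 * N := by omega
        exact_mod_cast this)
      rw [horth, Finset.sum_range] at h
      simp only [Fin.ext_iff]
      rw [h]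
      refine Finset.sum_congr rfl fun l _ => ?_
      simp [A, B]; ring
    have hBA : B * A = 1 := mul_eq_one_comm.1 hAB
    intro l hl
    have h := congrFun (congrFun hBA ⟨l, hl⟩) ⟨l, hl⟩
    rw [Matrix.mul_apply, Matrix.one_apply, if_pos rfl] at h
    have h2 : W l * ∑ k ∈ Finset.range N, ((p k).eval (xr l)) ^ 2 = 1 := by
      rw [Finset.sum_range, Finset.mul_sum, ← h]
      refine Finset.sum_congr rfl fun k _ => ?_
      simp [A, B]; ring
    exact eq_inv_of_mul_eq_one_left h2
  rw [hgen q hq]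
  exact Finset.sum_congr rfl fun l hl => by rw [hWeq l (Finset.mem_range.1 hl)]

/-- Polynomial functions with degree at most `d` in each variable. -/
def boxSpace (d n : ℕ) : Submodule ℝ ((Fin n → ℝ) → ℝ) :=
  Submodule.span ℝ ((fun mu : Fin n → ℕ => fun x : Fin n → ℝ => ∏ j, x j ^ mu j) ''
    {mu | ∀ j, mu j ≤ d})

theorem boxSpace_mul {d e n : ℕ} {f g : (Fin n → ℝ) → ℝ} (hf : f ∈ boxSpace d n)
    (hg : g ∈ boxSpace e n) : f * g ∈ boxSpace (d + e) n := by
  have h := Submodule.mul_mem_mul hf hg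
  unfold boxSpace at h
  rw [Submodule.span_mul_span] at h
  refine Submodule.span_mono ?_ h
  rintro _ ⟨_, ⟨mu, hmu, rfl⟩, _, ⟨nu, hnu, rfl⟩, rfl⟩
  refine ⟨mu + nu, fun j => Nat.add_le_add (hmu j) (hnu j), ?_⟩
  ext x
  simp [pow_add, Finset.prod_mul_distrib]

theorem pSpace_le_boxSpace (m n : ℕ) : pSpace m n ≤ boxSpace m n := by
  unfold pSpace
  rw [Submodule.span_le]
  rintro _ ⟨lam, hlam, rfl⟩
  have : msym n lam = ∑ mu ∈ Finset.univ.image (fun σ : Equiv.Perm (Fin n) => lam ∘ σ),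
      fun x : Fin n → ℝ => ∏ j : Fin n, x j ^ mu j := by
    ext x
    simp [msym, Finset.sum_apply]
  rw [this]
  refine Submodule.sum_mem _ fun mu hmu => Submodule.subset_span ⟨mu, ?_, rfl⟩
  obtain ⟨σ, _, rfl⟩ := Finset.mem_image.1 hmu
  intro j
  have hl : lam ∈ Lam m n := hlam
  rw [Lam, Finset.mem_filter, Fintype.mem_piFinset] at hl
  have := Finset.mem_range.1 (hl.1 (σ j))
  simp only [Function.comp_apply]
  omega

theorem pSpace_symm {m n : ℕ} {f : (Fin n → ℝ) → ℝ} (hf : f ∈ pSpace m n)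
    (σ : Equiv.Perm (Fin n)) (x : Fin n → ℝ) : f (x ∘ σ) = f x := by
  induction hf using Submodule.span_induction with
  | mem f h =>
    obtain ⟨lam, _, rfl⟩ := h
    unfold msym
    refine Finset.sum_bij (fun mu _ => mu ∘ σ.symm) ?_ ?_ ?_ ?_
    · intro mu hmu
      obtain ⟨τ, _, rfl⟩ := Finset.mem_image.1 hmu
      exact Finset.mem_image.2 ⟨σ.symm.trans τ, Finset.mem_univ _, rfl⟩
    · intro mu _ nu _ h
      exact σ.symm.surjective.injective_comp_right h
    · intro mu hmu
      obtain ⟨τ, _, rfl⟩ := Finset.mem_image.1 hmu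
      refine ⟨lam ∘ (σ.trans τ), Finset.mem_image.2 ⟨σ.trans τ, Finset.mem_univ _, rfl⟩, ?_⟩
      ext j; simp
    · intro mu _
      rw [← Equiv.prod_comp σ (fun j => x j ^ (mu ∘ σ.symm) j)]
      simp
  | zero => rfl
  | add f g _ _ hf hg => simp [hf, hg]
  | smul c f _ hf => simp [hf]

theorem vand_sq (n : ℕ) (x : Fin n → ℝ) : vand n x ^ 2 = (Matrix.vandermonde x).det ^ 2 := by
  rw [Matrix.det_vandermonde, vand, ← Finset.prod_pow, ← Finset.prod_pow]
  refine Finset.prod_congr rfl fun j _ => ?_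
  rw [← Finset.prod_pow, ← Finset.prod_pow]
  refine Finset.prod_congr (by ext; simp) fun k _ => ?_
  ring

theorem vand_sq_symm (n : ℕ) (x : Fin n → ℝ) (σ : Equiv.Perm (Fin n)) :
    vand n (x ∘ σ) ^ 2 = vand n x ^ 2 := by
  rw [vand_sq, vand_sq]
  have : Matrix.vandermonde (x ∘ σ) = (Matrix.vandermonde x).submatrix σ id := by
    ext; simp [Matrix.vandermonde]
  rw [this, Matrix.det_permute, mul_pow]
  rcases Int.units_eq_one_or (Equiv.Perm.sign σ) with h | h <;> simp [h]

theorem vand_sq_zero (n : ℕ) (x : Fin n → ℝ) (h : ¬ Function.Injective x) :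
    vand n x ^ 2 = 0 := by
  rw [vand_sq]
  have : (Matrix.vandermonde x).det = 0 := by
    by_contra h0
    exact h (Matrix.det_vandermonde_ne_zero_iff.1 h0)
  simp [this]

theorem vand_sq_mem (n : ℕ) : (fun x => vand n x ^ 2) ∈ boxSpace (2 * (n - 1)) n := by
  have h : (fun x : Fin n → ℝ => (Matrix.vandermonde x).det) ∈ boxSpace (n - 1) n := by
    have : (fun x : Fin n → ℝ => (Matrix.vandermonde x).det) =
        ∑ σ : Equiv.Perm (Fin n), ((Equiv.Perm.sign σ : ℤ) : ℝ) •
          fun x : Fin n → ℝ => ∏ j, x j ^ (σ j : ℕ) := by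
      ext x
      rw [← Matrix.det_transpose, Matrix.det_apply']
      simp [Finset.sum_apply, Matrix.vandermonde]
    rw [this]
    refine Submodule.sum_mem _ fun σ _ => Submodule.smul_mem _ _ (Submodule.subset_span
      ⟨fun j => (σ j : ℕ), fun j => ?_, rfl⟩)
    have := (σ j).isLt
    show (σ j : ℕ) ≤ n - 1
    omega
  have h2 := boxSpace_mul h h
  rw [← two_mul] at h2
  convert h2 using 1
  ext x
  simp only [Pi.mul_apply, vand_sq]
  ring

theorem box_quad (n N : ℕ) (a b : ℝ) (w : ℝ → ℝ) (c xr : ℕ → ℝ) (d : ℕ)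
    (hint : ∀ l : ℕ, IntegrableOn (fun x => x ^ l * w x) (Set.Ioo a b))
    (hq : ∀ l ≤ d, ∫ x in Set.Ioo a b, x ^ l * w x = ∑ i ∈ Finset.range N, c i * xr i ^ l)
    (f : (Fin n → ℝ) → ℝ) (hf : f ∈ boxSpace d n) :
    IntegrableOn (fun x : Fin n → ℝ => f x * ∏ j, w (x j))
      (Set.univ.pi (fun _ => Set.Ioo a b)) ∧
    ∫ x : Fin n → ℝ in Set.univ.pi (fun _ => Set.Ioo a b), f x * ∏ j, w (x j)
    = ∑ g ∈ Fintype.piFinset (fun _ : Fin n => Finset.range N),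
        f (xr ∘ g) * ∏ j, c (g j) := by
  have hvol : (volume : Measure (Fin n → ℝ)).restrict (Set.univ.pi (fun _ => Set.Ioo a b)) =
      Measure.pi (fun _ => volume.restrict (Set.Ioo a b)) := by
    rw [volume_pi, Measure.restrict_pi_pi]
  unfold IntegrableOn
  rw [hvol]
  induction hf using Submodule.span_induction with
  | mem f h =>
    obtain ⟨mu, hmu, rfl⟩ := h
    simp only [← Finset.prod_mul_distrib]
    refine ⟨?_, ?_⟩
    · exact Integrable.fintype_prod (f := fun j (t : ℝ) => t ^ mu j * w t) fun j => hint (mu j)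
    · rw [integral_fintype_prod_eq_prod (fun j (t : ℝ) => t ^ mu j * w t)]
      rw [Finset.prod_congr rfl fun j _ => hq (mu j) (hmu j), Finset.prod_univ_sum]
      refine Finset.sum_congr rfl fun g _ => Finset.prod_congr rfl fun j _ => ?_
      simp [mul_comm]
  | zero => simp
  | add f g _ _ hf hg =>
    simp only [Pi.add_apply, add_mul, Finset.sum_add_distrib]
    exact ⟨hf.1.add hg.1, by rw [integral_add hf.1 hg.1, hf.2, hg.2]⟩
  | smul r f _ hf =>
    simp only [Pi.smul_apply, smul_eq_mul, mul_assoc, ← Finset.mul_sum]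
    exact ⟨hf.1.const_mul r, by rw [integral_const_mul, hf.2]⟩

theorem lam_sum (m n : ℕ) (F : (Fin n → ℕ) → ℝ)
    (hsymm : ∀ g (σ : Equiv.Perm (Fin n)), F (g ∘ σ) = F g)
    (hzero : ∀ g, ¬ Function.Injective g → F g = 0) :
    ∑ g ∈ Fintype.piFinset (fun _ : Fin n => Finset.range (m + n)), F g =
      (n.factorial : ℝ) * ∑ lh ∈ Lam m n, F (fun j => lh j + (n - 1 - (j : ℕ))) := by
  classical
  have hanti : ∀ lh ∈ Lam m n, StrictAnti (fun j : Fin n => lh j + (n - 1 - (j : ℕ))) := by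
    intro lh hlh i j hij
    rw [Lam, Finset.mem_filter] at hlh
    have := hlh.2 i j hij.le
    have h3 : (i : ℕ) < j := hij
    have := j.isLt
    simp only
    omega
  have hR : (n.factorial : ℝ) * ∑ lh ∈ Lam m n, F (fun j => lh j + (n - 1 - (j : ℕ))) =
      ∑ q ∈ (Finset.univ : Finset (Equiv.Perm (Fin n))) ×ˢ Lam m n,
        F (fun j => q.2 j + (n - 1 - (j : ℕ))) := by
    rw [Finset.sum_product]
    simp [Fintype.card_perm]
  rw [hR, ← Finset.sum_filter_of_ne (p := Function.Injective)
    (fun g _ h => by by_contra h2; exact h (hzero g h2))]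
  symm
  refine Finset.sum_bij (fun q _ => (fun j : Fin n => q.2 j + (n - 1 - (j : ℕ))) ∘ q.1) ?_ ?_ ?_ ?_
  · rintro ⟨σ, lh⟩ hq
    have hl := (Finset.mem_product.1 hq).2
    refine Finset.mem_filter.2 ⟨?_, (hanti lh hl).injective.comp σ.injective⟩
    rw [Fintype.mem_piFinset]
    intro j
    rw [Lam, Finset.mem_filter, Fintype.mem_piFinset] at hl
    have : lh (σ j) < m + 1 := Finset.mem_range.1 (hl.1 (σ j))
    have := (σ j).isLt
    simp only [Function.comp_apply, Finset.mem_range]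
    omega
  · rintro ⟨σ, lh⟩ hq ⟨σ', lh'⟩ hq' h
    have hl := hanti lh (Finset.mem_product.1 hq).2
    have hl' := hanti lh' (Finset.mem_product.1 hq').2
    simp only at h
    have hr := congrArg Set.range h
    rw [σ.surjective.range_comp, σ'.surjective.range_comp] at hr
    have he : (fun j : Fin n => lh j + (n - 1 - (j : ℕ))) =
        (fun j : Fin n => lh' j + (n - 1 - (j : ℕ))) := by
      have e1 := hl.comp (Fin.rev_strictAnti (n := n))
      have e2 := hl'.comp (Fin.rev_strictAnti (n := n))
      have := (StrictMono.range_inj e1 e2).1 (by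
        rw [Fin.rev_surjective.range_comp, Fin.rev_surjective.range_comp, hr])
      exact Fin.rev_surjective.injective_comp_right this
    have hlam : lh = lh' := by
      ext j
      have := congrFun he j
      omega
    subst hlam
    have : σ = σ' := by
      ext j
      have := hl.injective (congrFun h j)
      rw [this]
    rw [this]
  · intro g hg
    obtain ⟨hg1, hg2⟩ := Finset.mem_filter.1 hg
    rw [Fintype.mem_piFinset] at hg1
    set τ : Equiv.Perm (Fin n) := Fin.revPerm.trans (Tuple.sort g) with hτ
    have hsm : StrictMono (g ∘ Tuple.sort g) :=
      (Tuple.monotone_sort g).strictMono_of_injective (hg2.comp (Tuple.sort g).injective)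
    have hsa : StrictAnti (g ∘ τ) := by
      have := hsm.comp_strictAnti (Fin.rev_strictAnti (n := n))
      exact this
    have hdiff : ∀ i j : Fin n, i ≤ j → (g ∘ τ) j + ((j : ℕ) - (i : ℕ)) ≤ (g ∘ τ) i := by
      intro i ⟨j, hj⟩ hij
      have hij' : (i : ℕ) ≤ j := hij
      clear hij
      induction j with
      | zero =>
        have : i = ⟨0, hj⟩ := by ext; simpa using hij'
        subst this
        simp
      | succ k ih =>
        rcases hij'.eq_or_lt with h | h
        · have : i = ⟨k + 1, hj⟩ := by ext; simpa using h
          subst this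
          simp
        · have h1 := ih (by omega) (by omega)
          have h2 : (g ∘ τ) ⟨k + 1, hj⟩ < (g ∘ τ) ⟨k, by omega⟩ := hsa (by simp [Fin.lt_def])
          simp only at h1 ⊢
          omega
    have hlow : ∀ j : Fin n, n - 1 - (j : ℕ) ≤ (g ∘ τ) j := by
      intro j
      have hj := j.isLt
      have := hdiff j ⟨n - 1, by omega⟩ (by rw [Fin.le_def]; simp only; omega)
      simp only at this
      omega
    have hup : ∀ j : Fin n, (g ∘ τ) j + j < m + n := by
      intro j
      have hj := j.isLt
      have := hdiff ⟨0, by omega⟩ j (by rw [Fin.le_def]; simp)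
      have h2 : (g ∘ τ) ⟨0, by omega⟩ < m + n := Finset.mem_range.1 (hg1 _)
      simp only [Nat.sub_zero] at this
      omega
    refine ⟨(τ.symm, fun j => (g ∘ τ) j - (n - 1 - (j : ℕ))), ?_, ?_⟩
    · refine Finset.mem_product.2 ⟨Finset.mem_univ _, ?_⟩
      rw [Lam, Finset.mem_filter, Fintype.mem_piFinset]
      refine ⟨fun j => ?_, fun i j hij => ?_⟩
      · have := hup j
        have := hlow j
        have := j.isLt
        rw [Finset.mem_range]
        show (g ∘ τ) j - (n - 1 - (j : ℕ)) < m + 1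
        omega
      · have h1 := hdiff i j hij
        have := hlow i
        have := hlow j
        have := j.isLt
        have : (i : ℕ) ≤ j := hij
        simp only
        omega
    · ext j
      have := hlow (τ.symm j)
      simp only [Function.comp_apply, Equiv.apply_symm_apply] at this ⊢
      omega
  · rintro ⟨σ, lh⟩ _
    exact (hsymm _ σ).symm

theorem gaussian_cubature_symmetric_functions
    (n : ℕ) (hn : 0 < n) (m : ℕ)
    (a b : ℝ) (hab : a < b)
    (w : ℝ → ℝ)
    (hw_cont : ContinuousOn w (Set.Ioo a b))
    (hw_pos : ∀ x ∈ Set.Ioo a b, 0 < w x)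
    (hw_mom : ∀ l : ℕ, IntegrableOn (fun x => x ^ l * w x) (Set.Ioo a b))
    -- the orthonormal polynomials for the weight w
    (p : ℕ → Polynomial ℝ)
    (hdeg : ∀ l, (p l).degree = l)
    (hlead : ∀ l, 0 < (p l).leadingCoeff)
    (horth : ∀ l k, (∫ x in Set.Ioo a b, (p l).eval x * (p k).eval x * w x)
      = if l = k then 1 else 0)
    -- the ordered roots of p_{m+n} in (a,b)
    (xr : ℕ → ℝ)
    (hxr_mem : ∀ l < m + n, xr l ∈ Set.Ioo a b)
    (hxr_mono : ∀ k l : ℕ, k < l → l < m + n → xr k < xr l)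
    (hxr_root : ∀ l < m + n, (p (m + n)).eval (xr l) = 0)
    -- a symmetric polynomial of degree at most 2m+1 in each variable
    (f : (Fin n → ℝ) → ℝ)
    (hf : f ∈ pSpace (2 * m + 1) n) :
    (1 / (n.factorial : ℝ)) *
      (∫ x : Fin n → ℝ in Set.univ.pi (fun _ => Set.Ioo a b),
        f x * (vand n x ^ 2 * ∏ j, w (x j)))
    = ∑ lh ∈ Lam m n,
        f (node n xr lh) *
          (vand n (node n xr lh) ^ 2 *
            ∏ j : Fin n, chrW p (m + n) xr (lh j + (n - 1 - (j : ℕ)))) := by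
  have hpi : ∀ q : Polynomial ℝ, IntegrableOn (fun x => q.eval x * w x) (Set.Ioo a b) := by
    intro q
    induction q using Polynomial.induction_on' with
    | add p q hp hq =>
      simp only [Polynomial.eval_add, add_mul]
      exact hp.add hq
    | monomial k c =>
      simp only [Polynomial.eval_monomial, mul_assoc]
      exact (hw_mom k).const_mul c
  let I : Polynomial ℝ →ₗ[ℝ] ℝ :=
    { toFun := fun q => ∫ x in Set.Ioo a b, q.eval x * w x
      map_add' := fun p q => by
        simp only [Polynomial.eval_add, add_mul]
        exact integral_add (hpi p) (hpi q)
      map_smul' := fun c q => by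
        simp only [Polynomial.eval_smul, smul_eq_mul, mul_assoc, RingHom.id_apply]
        exact integral_const_mul c _ }
  have hinj : Set.InjOn xr (Finset.range (m + n) : Finset ℕ) := by
    intro k hk l hl h
    have hk' : k < m + n := by simpa using hk
    have hl' : l < m + n := by simpa using hl
    rcases lt_trichotomy k l with h1 | h1 | h1
    · exact absurd h (hxr_mono k l h1 hl').ne
    · exact h1
    · exact absurd h (hxr_mono l k h1 hk').ne'
  have hq : ∀ l ≤ 2 * (m + n) - 1, ∫ x in Set.Ioo a b, x ^ l * w x =
      ∑ i ∈ Finset.range (m + n), chrW p (m + n) xr i * xr i ^ l := by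
    intro l hl
    have h := gauss_quad p hdeg I (fun l k => by
      have := horth l k
      rw [← this]
      simp [I]) (m + n) xr hinj hxr_root (Polynomial.X ^ l) (by
        rw [Polynomial.degree_X_pow]
        have : l < 2 * (m + n) := by omega
        exact_mod_cast this)
    simpa [I] using h
  have hmem : f * (fun x => vand n x ^ 2) ∈ boxSpace (2 * (m + n) - 1) n := by
    have h := boxSpace_mul (pSpace_le_boxSpace _ _ hf) (vand_sq_mem n)
    have e : 2 * m + 1 + 2 * (n - 1) = 2 * (m + n) - 1 := by omega
    rwa [e] at h
  have hbox := (box_quad n (m + n) a b w (chrW p (m + n) xr) xr _ hw_mom hq _ hmem).2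
  simp only [Pi.mul_apply, mul_assoc] at hbox
  rw [hbox, lam_sum m n (fun g => f (xr ∘ g) * (vand n (xr ∘ g) ^ 2 *
    ∏ j, chrW p (m + n) xr (g j)))]
  · rw [← mul_assoc, one_div, inv_mul_cancel₀ (by positivity), one_mul]
    rfl
  · intro g σ
    rw [← Function.comp_assoc, pSpace_symm hf σ, vand_sq_symm n _ σ]
    congr 2
    exact Equiv.prod_comp σ (fun j => chrW p (m + n) xr (g j))
  · intro g hg
    rw [vand_sq_zero n _ (fun h => hg (Function.Injective.of_comp h))]
    simp

end
end
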